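/- Let Γ ∈ ℝ^{d×d} be invertible, d ≥ 2. (i) For the compliance setting, the infimum over strictly positive λ ∈ Δ(d) of max_{j,j'∈{1,…,d}} (e_j − e_{j'})^⊤ (Γ^⊤ diag(λ) Γ)^{-1} (e_j − e_{j'}) is at most d · max_{j,j'} ‖Γ^{-⊤}(e_j − e_{j'})‖₂²; in particular the uniform design λ_i = 1/d achieves max_{j,j'} value exactly d · max_{j,j'} ‖Γ^{-⊤}(e_j − e_{j'})‖₂². (ii) If θ ∈ ℝ^d has a unique largest coordinate j* and Δ_min := min_{j ≠ j*} (θ_{j*} − θ_j), then ρ* := inf over strictly positive λ ∈ Δ(d) of max_{j ≠ j*} (e_{j*} − e_j)^⊤(Γ^⊤ diag(λ) Γ)^{-1}(e_{j*} − e_j) / ⟨e_{j*} − e_j, θ⟩² satisfies ρ* ≤ 2d / (σ_min(Γ)² · Δ_min²). -/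

import Mathlib

/-!
Under the uniform design the information matrix is `d⁻¹ • ΓᵀΓ`, so the squared norm of `v` that it
induces is `d * ‖Γ⁻ᵀ v‖²`, which is (i). For (ii), the eigenvalues of `(ΓᵀΓ)⁻¹` are the inverses of
those of `ΓᵀΓ`, hence `(ΓᵀΓ)⁻¹ ≤ σ_min(Γ)⁻² • 1` in the Loewner order; this is evaluated at
`v = e_{j*} - e_j`, where `‖v‖² = 2`.
-/

open Matrix

open Classical in
/-- The smallest eigenvalue of a Hermitian (symmetric) real matrix; `lamMin (Γᵀ * Γ)` is the
square `σ_min(Γ)²` of the smallest singular value of `Γ`.  (Junk value `0` if the matrix is not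
Hermitian.) -/
noncomputable def lamMin {d : ℕ} (M : Matrix (Fin d) (Fin d) ℝ) : ℝ :=
  if h : M.IsHermitian then ⨅ i, h.eigenvalues i else 0

section Inverse

variable {n R K : Type*} [Fintype n] [DecidableEq n]

lemma matrix_inv_smul_of_ne_zero [Field K] {c : K} (hc : c ≠ 0) (A : Matrix n n K) :
    (c • A)⁻¹ = c⁻¹ • A⁻¹ := by
  have hscalar : (c • (1 : Matrix n n K))⁻¹ = c⁻¹ • 1 := inv_eq_right_inv (by simp [smul_smul, hc])
  rw [← mul_one (c • A), smul_mul_assoc, ← Matrix.mul_smul, Matrix.mul_inv_rev, hscalar,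
    smul_one_mul]

lemma dotProduct_inv_transpose_mul_self_mulVec [CommRing R] (A : Matrix n n R) (v : n → R) :
    v ⬝ᵥ ((Aᵀ * A)⁻¹ *ᵥ v) = ∑ i, (A⁻¹ᵀ *ᵥ v) i ^ 2 := by
  rw [Matrix.mul_inv_rev, ← mulVec_mulVec, dotProduct_mulVec, ← mulVec_transpose,
    ← transpose_nonsing_inv]
  simp only [dotProduct, sq]

lemma dotProduct_self_single_sub_single [CommRing R] {i j : n} (hij : i ≠ j) :
    (Pi.single i 1 - Pi.single j 1 : n → R) ⬝ᵥ (Pi.single i 1 - Pi.single j 1) = 2 := by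
  simp [hij, hij.symm, one_add_one_eq_two]

end Inverse

lemma posDef_transpose_mul_self {m n : Type*} [Fintype m] [Fintype n] {A : Matrix m n ℝ}
    (hA : Function.Injective A.mulVec) : (Aᵀ * A).PosDef := by
  simpa only [conjTranspose_eq_transpose_of_trivial] using PosDef.conjTranspose_mul_self A hA

section LamMin

variable {d : ℕ} {M : Matrix (Fin d) (Fin d) ℝ}

lemma lamMin_eq_iInf_eigenvalues (hM : M.IsHermitian) : lamMin M = ⨅ i, hM.eigenvalues i :=
  dif_pos hM

lemma lamMin_le_eigenvalues (hM : M.IsHermitian) (i : Fin d) : lamMin M ≤ hM.eigenvalues i :=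
  (lamMin_eq_iInf_eigenvalues hM).trans_le (ciInf_le (Set.finite_range _).bddBelow i)

lemma lamMin_pos [Nonempty (Fin d)] (hM : M.PosDef) : 0 < lamMin M := by
  obtain ⟨i, hi⟩ := exists_eq_ciInf_of_finite (f := hM.isHermitian.eigenvalues)
  rw [lamMin_eq_iInf_eigenvalues hM.isHermitian, ← hi]
  exact hM.eigenvalues_pos i

lemma le_inv_lamMin_of_mem_spectrum_inv (hM : M.PosDef) {x : ℝ} (hx : x ∈ spectrum ℝ M⁻¹) :
    x ≤ (lamMin M)⁻¹ := by
  have hx' : x⁻¹ ∈ spectrum ℝ M := by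
    lift M to (Matrix (Fin d) (Fin d) ℝ)ˣ using hM.isUnit
    rw [← coe_units_inv] at hx
    exact spectrum.inv₀_mem_iff.2 hx
  rw [hM.isHermitian.spectrum_real_eq_range_eigenvalues] at hx'
  obtain ⟨i, hi⟩ := hx'
  have : Nonempty (Fin d) := ⟨i⟩
  exact le_inv_of_le_inv₀ (lamMin_pos hM) (hi ▸ lamMin_le_eigenvalues hM.isHermitian i)

open scoped MatrixOrder in
lemma inv_le_algebraMap_inv_lamMin (hM : M.PosDef) :
    M⁻¹ ≤ algebraMap ℝ (Matrix (Fin d) (Fin d) ℝ) (lamMin M)⁻¹ :=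
  le_algebraMap_of_spectrum_le (ha := hM.inv.isHermitian.isSelfAdjoint)
    fun _ hx ↦ le_inv_lamMin_of_mem_spectrum_inv hM hx

lemma dotProduct_inv_mulVec_le_div_lamMin (hM : M.PosDef) (v : Fin d → ℝ) :
    v ⬝ᵥ (M⁻¹ *ᵥ v) ≤ (v ⬝ᵥ v) / lamMin M := by
  have h := (le_iff.1 (inv_le_algebraMap_inv_lamMin hM)).dotProduct_mulVec_nonneg v
  rw [star_trivial, sub_mulVec, dotProduct_sub, sub_nonneg, Algebra.algebraMap_eq_smul_one,
    smul_mulVec, one_mulVec, dotProduct_smul, smul_eq_mul] at h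
  exact h.trans_eq (inv_mul_eq_div _ _)

end LamMin

lemma sSup_setOf_exists_eq_const_mul {α β : Type*} {c : ℝ} (hc : 0 ≤ c) (f : α → β → ℝ) :
    sSup {v : ℝ | ∃ a b, v = c * f a b} = c * sSup {v : ℝ | ∃ a b, v = f a b} := by
  rw [← smul_eq_mul, ← Real.sSup_smul_of_nonneg hc]
  congr 1
  ext v
  constructor
  · rintro ⟨a, b, rfl⟩
    exact Set.smul_mem_smul_set ⟨a, b, rfl⟩
  · rintro ⟨_, ⟨a, b, rfl⟩, rfl⟩
    exact ⟨a, b, rfl⟩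

section Design

variable {m n : Type*} [Fintype m] [DecidableEq m] [Fintype n] [DecidableEq n]

/-- The squared norm `‖v‖²` induced by the inverse of the information matrix `Γᵀ diag(lam) Γ` of
the design `lam`: up to the noise level, the variance of the least-squares estimate of `⟨v, θ⟩`.
Junk value `0` if the information matrix is singular. -/
noncomputable def designVariance {K : Type*} [Field K] (Γ : Matrix m n K) (lam : m → K)
    (v : n → K) : K :=
  v ⬝ᵥ ((Γᵀ * diagonal lam * Γ)⁻¹ *ᵥ v)

lemma designVariance_nonneg (Γ : Matrix m n ℝ) {lam : m → ℝ} (hlam : ∀ i, 0 ≤ lam i) (v : n → ℝ) :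
    0 ≤ designVariance Γ lam v := by
  have hinfo : (Γᵀ * diagonal lam * Γ).PosSemidef := by
    simpa only [conjTranspose_eq_transpose_of_trivial] using
      (PosSemidef.diagonal hlam).conjTranspose_mul_mul_same Γ
  simpa only [designVariance, star_trivial] using hinfo.inv.dotProduct_mulVec_nonneg v

lemma designVariance_const {K : Type*} [Field K] (Γ : Matrix m n K) {c : K} (hc : c ≠ 0)
    (v : n → K) :
    designVariance Γ (fun _ ↦ c) v = c⁻¹ * (v ⬝ᵥ ((Γᵀ * Γ)⁻¹ *ᵥ v)) := by
  rw [designVariance, ← smul_one_eq_diagonal, Matrix.mul_smul, Matrix.mul_one, Matrix.smul_mul,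
    matrix_inv_smul_of_ne_zero hc, smul_mulVec, dotProduct_smul, smul_eq_mul]

lemma designVariance_one_div_eq_sum_sq {K : Type*} [Field K] (Γ : Matrix n n K) {a : K}
    (ha : a ≠ 0) (v : n → K) :
    designVariance Γ (fun _ ↦ 1 / a) v = a * ∑ i, (Γ⁻¹ᵀ *ᵥ v) i ^ 2 := by
  rw [designVariance_const Γ (one_div_ne_zero ha), dotProduct_inv_transpose_mul_self_mulVec,
    one_div, inv_inv]

lemma designVariance_one_div_le {d : ℕ} {Γ : Matrix m (Fin d) ℝ}
    (hΓ : Function.Injective Γ.mulVec) {a : ℝ} (ha : 0 < a) (v : Fin d → ℝ) :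
    designVariance Γ (fun _ ↦ 1 / a) v ≤ a * ((v ⬝ᵥ v) / lamMin (Γᵀ * Γ)) := by
  rw [designVariance_const Γ (one_div_pos.2 ha).ne', one_div, inv_inv]
  gcongr
  exact dotProduct_inv_mulVec_le_div_lamMin (posDef_transpose_mul_self hΓ) v

lemma designVariance_one_div_single_sub_single_div_sq_le {d : ℕ} {Γ : Matrix m (Fin d) ℝ}
    (hΓ : Function.Injective Γ.mulVec) {a : ℝ} (ha : 0 < a) {i j : Fin d} (hij : i ≠ j)
    {δ g : ℝ} (hδ : 0 < δ) (hg : δ ≤ g) :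
    designVariance Γ (fun _ ↦ 1 / a) (Pi.single i 1 - Pi.single j 1) / g ^ 2
      ≤ 2 * a / (lamMin (Γᵀ * Γ) * δ ^ 2) := by
  have hvar : designVariance Γ (fun _ ↦ 1 / a) (Pi.single i 1 - Pi.single j 1)
      ≤ 2 * a / lamMin (Γᵀ * Γ) := by
    refine (designVariance_one_div_le hΓ ha _).trans_eq ?_
    rw [dotProduct_self_single_sub_single hij, mul_div_left_comm, mul_div_assoc]
  have hvar0 := designVariance_nonneg Γ (fun _ ↦ (one_div_pos.2 ha).le)
    (Pi.single i 1 - Pi.single j 1)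
  rw [← div_div]
  exact div_le_div₀ (hvar0.trans hvar) hvar (by positivity) (by gcongr)

lemma sSup_designVariance_one_div (Γ : Matrix n n ℝ) {a : ℝ} (ha : 0 < a) :
    sSup {v : ℝ | ∃ j j' : n,
        v = designVariance Γ (fun _ ↦ 1 / a) (Pi.single j 1 - Pi.single j' 1)}
      = a * sSup {v : ℝ | ∃ j j' : n,
        v = ∑ i, (Γ⁻¹ᵀ *ᵥ (Pi.single j 1 - Pi.single j' 1)) i ^ 2} := by
  simp only [designVariance_one_div_eq_sum_sq Γ ha.ne']
  exact sSup_setOf_exists_eq_const_mul ha.le _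

end Design

lemma sInf_sSup_positive_designs_le {n : Type*} [Fintype n] {S : (n → ℝ) → Set ℝ}
    (hS : ∀ lam, (∀ i, 0 < lam i) → ∀ v ∈ S lam, 0 ≤ v) {lam₀ : n → ℝ} (hpos : ∀ i, 0 < lam₀ i)
    (hsum : ∑ i, lam₀ i = 1) :
    sInf {r : ℝ | ∃ lam : n → ℝ, (∀ i, 0 < lam i) ∧ (∑ i, lam i) = 1 ∧ r = sSup (S lam)}
      ≤ sSup (S lam₀) := by
  refine csInf_le ⟨0, ?_⟩ ⟨lam₀, hpos, hsum, rfl⟩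
  rintro _ ⟨lam, hlam, -, rfl⟩
  exact Real.sSup_nonneg (hS lam hlam)

section Gap

variable {ι : Type*} [Finite ι]

/-- The minimum gap `Δ_min = min_{j ≠ i} (θ i - θ j)` of the coordinate `i`; junk value `0` if
`i` is the only coordinate. -/
noncomputable def minGap (θ : ι → ℝ) (i : ι) : ℝ :=
  sInf {v : ℝ | ∃ j, j ≠ i ∧ v = θ i - θ j}

lemma finite_setOf_gap (θ : ι → ℝ) (i : ι) : {v : ℝ | ∃ j, j ≠ i ∧ v = θ i - θ j}.Finite :=
  (Set.finite_range fun j ↦ θ i - θ j).subset fun _ ⟨j, _, hv⟩ ↦ ⟨j, hv.symm⟩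

lemma minGap_le (θ : ι → ℝ) {i j : ι} (hj : j ≠ i) : minGap θ i ≤ θ i - θ j :=
  csInf_le (finite_setOf_gap θ i).bddBelow ⟨j, hj, rfl⟩

lemma minGap_pos [Nontrivial ι] {θ : ι → ℝ} {i : ι} (hmax : ∀ j, j ≠ i → θ j < θ i) :
    0 < minGap θ i := by
  obtain ⟨j, hj⟩ := exists_ne i
  refine ((finite_setOf_gap θ i).lt_csInf_iff ⟨_, j, hj, rfl⟩).2 ?_
  rintro _ ⟨k, hk, rfl⟩
  exact sub_pos.2 (hmax k hk)

end Gap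

/-- Compliance-setting design bounds.  (i) The infimum over strictly positive
designs `λ ∈ Δ(d)` of `max_{j,j'} ‖e_j − e_{j'}‖²_{(Γ^⊤ diag(λ) Γ)^{-1}}` is at most
`d · max_{j,j'} ‖Γ^{-⊤}(e_j − e_{j'})‖₂²`, and the uniform design `λ_i = 1/d` achieves exactly
this value.  (ii) If `θ` has unique largest coordinate `j*` with minimum gap `Δ_min`, then
`ρ* ≤ 2d / (σ_min(Γ)² Δ_min²)`. -/
theorem compliance_design_bounds {d : ℕ} (hd : 2 ≤ d)
    (Γ : Matrix (Fin d) (Fin d) ℝ) (hΓ : IsUnit Γ.det)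
    (θ : Fin d → ℝ) (jstar : Fin d) (hmax : ∀ j, j ≠ jstar → θ j < θ jstar)
    (Δmin : ℝ) (hΔ : Δmin = sInf {v : ℝ | ∃ j, j ≠ jstar ∧ v = θ jstar - θ j})
    (ρstar : ℝ)
    (hρ : ρstar = sInf {r : ℝ | ∃ lam : Fin d → ℝ,
      (∀ i, 0 < lam i) ∧ (∑ i, lam i) = 1 ∧
      r = sSup {v : ℝ | ∃ j, j ≠ jstar ∧
        v = ((Pi.single jstar 1 - Pi.single j 1) ⬝ᵥ
              ((Γᵀ * diagonal lam * Γ)⁻¹ *ᵥ (Pi.single jstar 1 - Pi.single j 1)))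
            / ((Pi.single jstar (1 : ℝ) - Pi.single j 1) ⬝ᵥ θ) ^ 2}}) :
    -- (i) the infimum over strictly positive designs is at most `d · max_{j,j'} ‖Γ^{-⊤}(e_j − e_{j'})‖₂²`
    (sInf {r : ℝ | ∃ lam : Fin d → ℝ,
        (∀ i, 0 < lam i) ∧ (∑ i, lam i) = 1 ∧
        r = sSup {v : ℝ | ∃ j j' : Fin d,
          v = (Pi.single j 1 - Pi.single j' 1) ⬝ᵥ
            ((Γᵀ * diagonal lam * Γ)⁻¹ *ᵥ (Pi.single j 1 - Pi.single j' 1))}}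
      ≤ d * sSup {v : ℝ | ∃ j j' : Fin d,
          v = ∑ i, ((Γ⁻¹)ᵀ *ᵥ (Pi.single j 1 - Pi.single j' 1)) i ^ 2})
    -- the uniform design achieves exactly this value
    ∧ (sSup {v : ℝ | ∃ j j' : Fin d,
          v = (Pi.single j 1 - Pi.single j' 1) ⬝ᵥ
            ((Γᵀ * diagonal (fun _ : Fin d => (1 : ℝ) / d) * Γ)⁻¹ *ᵥ
              (Pi.single j 1 - Pi.single j' 1))}
        = d * sSup {v : ℝ | ∃ j j' : Fin d,
          v = ∑ i, ((Γ⁻¹)ᵀ *ᵥ (Pi.single j 1 - Pi.single j' 1)) i ^ 2})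
    -- (ii) `ρ* ≤ 2d / (σ_min(Γ)² Δ_min²)`
    ∧ ρstar ≤ 2 * d / (lamMin (Γᵀ * Γ) * Δmin ^ 2) := by
  have : Nontrivial (Fin d) := Fin.nontrivial_iff_two_le.2 hd
  have hinj : Function.Injective Γ.mulVec :=
    mulVec_injective_of_isUnit ((isUnit_iff_isUnit_det Γ).2 hΓ)
  have hd0 : (0 : ℝ) < d := Nat.cast_pos.2 (by omega)
  have hpos (_ : Fin d) : (0 : ℝ) < 1 / d := one_div_pos.2 hd0
  have hsum : ∑ _i : Fin d, (1 : ℝ) / d = 1 := by simp [hd0.ne']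
  have huniform := sSup_designVariance_one_div Γ hd0
  refine ⟨(sInf_sSup_positive_designs_le ?_ hpos hsum).trans_eq huniform, huniform, ?_⟩
  · rintro lam hlam _ ⟨j, j', rfl⟩
    exact designVariance_nonneg Γ (fun i ↦ (hlam i).le) _
  rw [hρ, show Δmin = minGap θ jstar from hΔ]
  refine (sInf_sSup_positive_designs_le ?_ hpos hsum).trans (csSup_le ?_ ?_)
  · rintro lam hlam _ ⟨j, -, rfl⟩
    exact div_nonneg (designVariance_nonneg Γ (fun i ↦ (hlam i).le) _) (sq_nonneg _)
  · obtain ⟨j, hj⟩ := exists_ne jstar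
    exact ⟨_, j, hj, rfl⟩
  · rintro _ ⟨j, hj, rfl⟩
    rw [sub_dotProduct _ _ θ, single_one_dotProduct, single_one_dotProduct]
    exact designVariance_one_div_single_sub_single_div_sq_le hinj hd0 hj.symm (minGap_pos hmax)
      (minGap_le θ hj)
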